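/- arXiv:1105.5959 — 3 statements merged into one kernel-verified Lean document; each statement's English description precedes it below -/
import Mathlib

section
/- Let 𝕋 be a time scale and dσ the Lebesgue–Stieltjes measure generated by the forward shift σ. Then for all α, β ∈ 𝕋 with α ≤ β, dσ([α, β)) = β − α. -/
open MeasureTheory Set Filter
open scoped ENNReal Classical

/-- Forward shift of a time scale. -/
noncomputable def tsSigma (T : Set ℝ) (t : ℝ) : ℝ :=
  if ({s | s ∈ T ∧ t < s}).Nonempty then sInf {s | s ∈ T ∧ t < s} else sSup T

theorem tsSigma_ge_self {T : Set ℝ} {β : ℝ} (hβ : β ∈ T) : β ≤ tsSigma T β := by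
  unfold tsSigma
  split_ifs with h
  · exact le_csInf h (fun s hs => hs.2.le)
  · refine le_csSup ⟨β, fun s hs => ?_⟩ hβ
    by_contra hlt
    exact h ⟨s, hs, not_le.mp hlt⟩

theorem tsSigma_bounds {T : Set ℝ} {c α : ℝ} (hα : α ∈ T) (h : c < α) :
    c ≤ tsSigma T c ∧ tsSigma T c ≤ α := by
  have hn : ({s | s ∈ T ∧ c < s}).Nonempty := ⟨α, hα, h⟩
  unfold tsSigma
  rw [if_pos hn]
  exact ⟨le_csInf hn (fun s hs => hs.2.le), csInf_le ⟨c, fun s hs => hs.2.le⟩ ⟨hα, h⟩⟩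

theorem ts_measure_Icc (T : Set ℝ) (μ : Measure ℝ)
    (hμ : ∀ c d : ℝ, c ≤ d → μ (Set.Ioc c d) = ENNReal.ofReal (tsSigma T d - tsSigma T c))
    (α β : ℝ) (hα : α ∈ T) (hαβ : α ≤ β) :
    μ (Set.Icc α β) = ENNReal.ofReal (tsSigma T β - α) := by
  have hpos : ∀ n : ℕ, (0 : ℝ) < 1 / ((n : ℝ) + 1) := fun n => by positivity
  have hlim : Tendsto (fun n : ℕ => α - 1 / ((n : ℝ) + 1)) atTop (nhds α) := by
    simpa using (tendsto_const_nhds (x := α)).sub (tendsto_one_div_add_atTop_nhds_zero_nat (𝕜 := ℝ))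
  have hset : Set.Icc α β = ⋂ n : ℕ, Set.Ioc (α - 1 / ((n : ℝ) + 1)) β := by
    ext x
    simp only [mem_Icc, mem_iInter, mem_Ioc]
    constructor
    · rintro ⟨h1, h2⟩ n
      exact ⟨by linarith [hpos n], h2⟩
    · intro h
      exact ⟨le_of_tendsto' hlim (fun n => (h n).1.le), (h 0).2⟩
  have hσ : Tendsto (fun n : ℕ => tsSigma T (α - 1 / ((n : ℝ) + 1))) atTop (nhds α) :=
    tendsto_of_tendsto_of_tendsto_of_le_of_le hlim tendsto_const_nhds
      (fun n => (tsSigma_bounds hα (by linarith [hpos n])).1)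
      (fun n => (tsSigma_bounds hα (by linarith [hpos n])).2)
  have hm : ∀ n : ℕ, μ (Set.Ioc (α - 1 / ((n : ℝ) + 1)) β)
      = ENNReal.ofReal (tsSigma T β - tsSigma T (α - 1 / ((n : ℝ) + 1))) :=
    fun n => hμ _ _ (by linarith [hpos n])
  have h1 : Tendsto (fun n : ℕ => μ (Set.Ioc (α - 1 / ((n : ℝ) + 1)) β)) atTop
      (nhds (μ (Set.Icc α β))) := by
    rw [hset]
    refine tendsto_measure_iInter_atTop (fun n => measurableSet_Ioc.nullMeasurableSet) ?_
      ⟨0, by rw [hm]; exact ENNReal.ofReal_ne_top⟩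
    intro m n hmn
    refine Set.Ioc_subset_Ioc_left ?_
    have := Nat.one_div_le_one_div (α := ℝ) hmn
    linarith
  refine tendsto_nhds_unique h1 ?_
  simp only [hm]
  exact ENNReal.tendsto_ofReal (tendsto_const_nhds.sub hσ)

/-- If `μ` is the Lebesgue–Stieltjes measure generated by the forward shift `σ` of a time
scale `𝕋` (i.e. `μ((c,d]) = σ(d) - σ(c)`), then `μ([α,β)) = β - α` for all `α ≤ β` in `𝕋`. -/
theorem stieltjes_measure_of_forward_shift_Ico
    (T : Set ℝ) (hne : T.Nonempty) (hcl : IsClosed T) (μ : Measure ℝ)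
    (hμ : ∀ c d : ℝ, c ≤ d → μ (Set.Ioc c d) = ENNReal.ofReal (tsSigma T d - tsSigma T c)) :
    ∀ α ∈ T, ∀ β ∈ T, α ≤ β → μ (Set.Ico α β) = ENNReal.ofReal (β - α) := by
  intro α hα β hβ hαβ
  have h1 := ts_measure_Icc T μ hμ α β hα hαβ
  have h2 := ts_measure_Icc T μ hμ β β hβ le_rfl
  have h3 : μ (Set.Icc α β) = μ (Set.Ico α β) + μ (Set.Icc β β) := by
    rw [Set.Icc_self, ← Set.Ico_union_right hαβ]
    exact measure_union (by simp) (measurableSet_singleton β)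
  have hs := tsSigma_ge_self hβ
  rw [h1, h2, show tsSigma T β - α = (β - α) + (tsSigma T β - β) by ring,
    ENNReal.ofReal_add (by linarith) (by linarith)] at h3
  exact ((ENNReal.add_left_inj ENNReal.ofReal_ne_top).mp h3).symm
end

section
/- Let 𝕋 be a bounded time scale. Then the Lebesgue–Stieltjes measure dσ generated by the forward shift σ decomposes as dσ = (Lebesgue measure restricted to 𝕋) + Σ_{t ∈ 𝕋, σ(t) > t} μ(t)·δ_t, where δ_t is the Dirac measure at t and μ(t) = σ(t) − t is the graininess; that is, for every Borel set B ⊆ ℝ, dσ(B) = λ(B ∩ 𝕋) + Σ_{t ∈ B ∩ 𝕋, σ(t)>t} (σ(t) − t), the sum running over the (countable) set of right-scattered points in B. -/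
open MeasureTheory Set Filter
open scoped ENNReal Classical

theorem tsS_mem {T : Set ℝ} (hne : T.Nonempty) (hcl : IsClosed T)
    (hbb : BddBelow T) (hba : BddAbove T) (t : ℝ) : tsSigma T t ∈ T := by
  unfold tsSigma
  split_ifs with h
  · have hb : BddBelow {s | s ∈ T ∧ t < s} := ⟨t, fun s hs => hs.2.le⟩
    have h1 := csInf_mem_closure h hb
    have h2 : closure {s | s ∈ T ∧ t < s} ⊆ T := closure_minimal (fun s hs => hs.1) hcl
    exact h2 h1
  · exact hcl.csSup_mem hne hba

theorem tsS_le {T : Set ℝ} {t s : ℝ} (hs : s ∈ T) (h : t < s) : tsSigma T t ≤ s := by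
  unfold tsSigma
  rw [if_pos ⟨s, hs, h⟩]
  exact csInf_le ⟨t, fun s hs => hs.2.le⟩ ⟨hs, h⟩

theorem le_tsS {T : Set ℝ} {t s x : ℝ} (hs : s ∈ T) (h : t < s)
    (hx : ∀ u ∈ T, t < u → x ≤ u) : x ≤ tsSigma T t := by
  unfold tsSigma
  rw [if_pos ⟨s, hs, h⟩]
  exact le_csInf ⟨s, hs, h⟩ (fun u hu => hx u hu.1 hu.2)

theorem le_tsS' {T : Set ℝ} (hba : BddAbove T) {t s : ℝ} (hs : s ∈ T) (h : s ≤ t) :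
    s ≤ tsSigma T t := by
  by_cases hn : ({s | s ∈ T ∧ t < s}).Nonempty
  · obtain ⟨u, hu, htu⟩ := hn
    exact le_tsS hu htu (fun v _ hv => h.trans hv.le)
  · unfold tsSigma
    rw [if_neg hn]
    exact le_csSup hba hs

theorem tsS_mono {T : Set ℝ} (hne : T.Nonempty) (hcl : IsClosed T)
    (hbb : BddBelow T) (hba : BddAbove T) {t d : ℝ} (h : t ≤ d) :
    tsSigma T t ≤ tsSigma T d := by
  have m1 := tsS_mem hne hcl hbb hba t
  have m2 := tsS_mem hne hcl hbb hba d
  by_cases h1 : t < tsSigma T d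
  · exact tsS_le m2 h1
  by_cases h2 : tsSigma T t ≤ d
  · exact le_tsS' hba m1 h2
  push Not at h1 h2
  have : d ≤ tsSigma T d := le_tsS m1 h2 (fun u _ hu => hu.le)
  have : t = d := by linarith
  rw [this]

theorem tsS_disj {T : Set ℝ} {t s x : ℝ} (hs : s ∈ T) (h : x ∈ Ioo t (tsSigma T t)) : s ≤ t ∨ x < s := by
  by_contra! hc
  have := tsS_le hs hc.1
  linarith [h.2]

theorem tsS_pd (T : Set ℝ) : {t | t ∈ T ∧ t < tsSigma T t}.PairwiseDisjoint
    (fun t => Ioo t (tsSigma T t)) := by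
  intro t ht s hs hts
  refine Set.disjoint_left.2 fun x hx hx' => ?_
  have h1 := tsS_disj hs.1 hx
  have h2 := tsS_disj ht.1 hx'
  apply hts
  rcases h1 with h1 | h1
  · rcases h2 with h2 | h2
    · exact le_antisymm h2 h1
    · linarith [hx.1]
  · linarith [hx'.1]

theorem tsS_countable (T : Set ℝ) : {t | t ∈ T ∧ t < tsSigma T t}.Countable :=
  (tsS_pd T).countable_of_isOpen (fun _ _ => isOpen_Ioo) (fun _ h => nonempty_Ioo.2 h.2)

theorem tsS_Ioc {T : Set ℝ} (hne : T.Nonempty) (hcl : IsClosed T)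
    (hbb : BddBelow T) (hba : BddAbove T) {c d : ℝ} (h : c ≤ d) :
    volume (Ioc c d ∩ T) +
        ∑' t : {t : ℝ // t ∈ Ioc c d ∩ T ∧ t < tsSigma T t}, ENNReal.ofReal (tsSigma T t - t)
      = ENNReal.ofReal (tsSigma T d - tsSigma T c) := by
  have hc : {t : ℝ | t ∈ Ioc c d ∩ T ∧ t < tsSigma T t}.Countable :=
    (tsS_countable T).mono (fun t (ht : t ∈ Ioc c d ∩ T ∧ t < tsSigma T t) => And.intro ht.1.2 ht.2)
  haveI : Countable {t : ℝ // t ∈ Ioc c d ∩ T ∧ t < tsSigma T t} := hc.to_subtype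
  have e1 : ∑' t : {t : ℝ // t ∈ Ioc c d ∩ T ∧ t < tsSigma T t}, ENNReal.ofReal (tsSigma T t - t)
      = volume (⋃ t : {t : ℝ // t ∈ Ioc c d ∩ T ∧ t < tsSigma T t},
          Ioo (t : ℝ) (tsSigma T t)) := by
    rw [measure_iUnion]
    · simp [Real.volume_Ioo]
    · intro t s hts
      exact tsS_pd T ⟨t.2.1.2, t.2.2⟩ ⟨s.2.1.2, s.2.2⟩ (fun e => hts (Subtype.ext e))
    · exact fun _ => measurableSet_Ioo
  rw [e1, ← measure_union]
  · apply le_antisymm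
    · rw [← Real.volume_Icc]
      apply measure_mono
      rintro x (⟨hx, hxT⟩ | hx)
      · exact ⟨tsS_le hxT hx.1, le_tsS' hba hxT hx.2⟩
      · obtain ⟨⟨t, ⟨ht, htT⟩, hlt⟩, hy⟩ := mem_iUnion.1 hx
        exact ⟨(tsS_le htT ht.1).trans hy.1.le,
          hy.2.le.trans (tsS_mono hne hcl hbb hba ht.2)⟩
    · rw [← Real.volume_Ioo]
      apply measure_mono
      rintro x ⟨h1, h2⟩
      have mc := tsS_mem hne hcl hbb hba c
      have md := tsS_mem hne hcl hbb hba d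
      have hcd : c < tsSigma T d := by
        by_contra! hh
        have := le_tsS' hba md hh
        linarith
      have hxd : ∀ u ∈ T, u < x ∨ u = x → u ≤ d := by
        intro u hu hux
        by_contra! hh
        have := tsS_le hu hh
        rcases hux with hux | hux <;> linarith
      by_cases hxT : x ∈ T
      · left
        refine ⟨⟨?_, hxd x hxT (Or.inr rfl)⟩, hxT⟩
        have := le_tsS md hcd (x := c) (fun u _ hu => hu.le)
        linarith
      · right
        have hK : (T ∩ Iic x).Nonempty := ⟨_, mc, h1.le⟩
        have hKb : BddAbove (T ∩ Iic x) := ⟨x, fun u hu => hu.2⟩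
        have hm := (hcl.inter isClosed_Iic).csSup_mem hK hKb
        have hle : ∀ u ∈ T, u ≤ x → u ≤ sSup (T ∩ Iic x) := fun u hu hux =>
          le_csSup hKb ⟨hu, hux⟩
        generalize sSup (T ∩ Iic x) = t at hm hle
        have htx : t < x := lt_of_le_of_ne hm.2 (fun e => hxT (e ▸ hm.1))
        have hct : c < t := by
          by_contra! hh
          have : x ≤ tsSigma T c := le_tsS md hcd (fun u hu hcu => by
            by_contra! hux
            linarith [hle u hu hux.le])
          linarith
        have hxs : x ≤ tsSigma T t := le_tsS md (htx.trans h2) (fun u hu hcu => by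
            by_contra! hux
            linarith [hle u hu hux.le])
        have hxs' : x < tsSigma T t := lt_of_le_of_ne hxs
          (fun e => hxT (e ▸ tsS_mem hne hcl hbb hba t))
        exact mem_iUnion.2 ⟨⟨t, ⟨⟨hct, hxd t hm.1 (Or.inl htx)⟩, hm.1⟩, htx.trans hxs'⟩,
          htx, hxs'⟩
  · refine Set.disjoint_left.2 fun x hx hx' => ?_
    obtain ⟨t, hx'⟩ := mem_iUnion.1 hx'
    rcases tsS_disj hx.2 hx' with h | h
    · linarith [hx'.1]
    · exact lt_irrefl _ h
  · exact MeasurableSet.iUnion fun _ => measurableSet_Ioo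

/-- Lebesgue decomposition of the Lebesgue–Stieltjes measure `μ = dσ` generated by the forward
shift of a bounded time scale `𝕋`: for every Borel set `B`,
`dσ(B) = λ(B ∩ 𝕋) + ∑_{t ∈ B ∩ 𝕋 right-scattered} (σ(t) - t)`. -/
theorem stieltjes_measure_forward_shift_decomposition
    (T : Set ℝ) (hne : T.Nonempty) (hcl : IsClosed T)
    (hbb : BddBelow T) (hba : BddAbove T) (μ : Measure ℝ)
    (hμ : ∀ c d : ℝ, c ≤ d → μ (Set.Ioc c d) = ENNReal.ofReal (tsSigma T d - tsSigma T c)) :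
    ∀ B : Set ℝ, MeasurableSet B →
      μ B = volume (B ∩ T) +
        ∑' t : {t : ℝ // t ∈ B ∩ T ∧ t < tsSigma T t}, ENNReal.ofReal (tsSigma T t - t) := by
  have key : ∀ B : Set ℝ, MeasurableSet B →
      (volume.restrict T + Measure.sum (fun t : {t : ℝ | t ∈ T ∧ t < tsSigma T t} =>
        ENNReal.ofReal (tsSigma T t - t) • Measure.dirac (t : ℝ))) B = volume (B ∩ T) +
        ∑' t : {t : ℝ // t ∈ B ∩ T ∧ t < tsSigma T t}, ENNReal.ofReal (tsSigma T t - t) := by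
    intro B hB
    rw [Measure.add_apply, Measure.restrict_apply hB, Measure.sum_apply _ hB]
    congr 1
    simp only [Measure.smul_apply, Measure.dirac_apply' _ hB, smul_eq_mul]
    have a1 := tsum_subtype {t : ℝ | t ∈ T ∧ t < tsSigma T t}
      (fun t => ENNReal.ofReal (tsSigma T t - t) * B.indicator 1 t)
    have a2 := tsum_subtype {t : ℝ | t ∈ B ∩ T ∧ t < tsSigma T t}
      (fun t => ENNReal.ofReal (tsSigma T t - t))
    refine a1.trans (Eq.trans ?_ a2.symm)
    congr 1
    ext t
    by_cases h1 : t ∈ B <;> by_cases h2 : t ∈ T ∧ t < tsSigma T t <;>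
      simp [Set.indicator, h1, h2]
  intro B hB
  rw [← key B hB]
  haveI : IsLocallyFiniteMeasure μ := ⟨fun x => ⟨Ioc (x - 1) (x + 1),
    Ioc_mem_nhds (by linarith) (by linarith), by
      rw [hμ _ _ (by linarith)]; exact ENNReal.ofReal_lt_top⟩⟩
  congr 1
  refine Measure.ext_of_Ioc _ _ fun c d hcd => ?_
  rw [hμ _ _ hcd.le, key _ measurableSet_Ioc, tsS_Ioc hne hcl hbb hba hcd.le]
end

section
/- Let g be locally integrable with respect to |r| dσ_κ and z ∈ ℂ. Then for every c ∈ 𝕋_κ and d₁, d₂ ∈ ℂ there exists exactly one solution pair (u, u^[1]) of (ℓ − z)u = g with u(c) = d₁ and u^[1](c) = d₂. -/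
open MeasureTheory Set Filter
open scoped ENNReal NNReal Classical

/-- Backward shift of a time scale. -/
noncomputable def tsRho (T : Set ℝ) (t : ℝ) : ℝ :=
  if ({s | s ∈ T ∧ s < t}).Nonempty then sSup {s | s ∈ T ∧ s < t} else sInf T

/-- `𝕋_κ` : the time scale with the left endpoint removed if it is finite and right-scattered. -/
noncomputable def tsKappa (T : Set ℝ) : Set ℝ :=
  if BddBelow T ∧ sInf T < tsSigma T (sInf T) then T \ {sInf T} else T

/-- Extension `p̄` of a function on `𝕋_κ` to all of `ℝ`. -/
noncomputable def extK (T : Set ℝ) (p : ℝ → ℂ) (t : ℝ) : ℂ :=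
  if t ∈ tsKappa T then p t else p (tsSigma (tsKappa T) t)

/-- Coercion of a real-valued coefficient to a complex-valued one. -/
def cR (f : ℝ → ℝ) : ℝ → ℂ := fun t => (f t : ℂ)

/-- `(u, u^[1])` is an integrated pair with density `h` against the measure `μ = dσ_κ`. -/
def IsPair (T : Set ℝ) (μ : Measure ℝ) (p : ℝ → ℂ) (u u1 h : ℝ → ℂ) : Prop :=
  ∀ c x : ℝ, c ≤ x →
    u x = u c + ∫ t in c..x, u1 t / extK T p t ∧
    u1 x = u1 c + ∫ t in Set.Ioc c x, h t ∂μ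

/-- `(u, u^[1])` is a solution pair of `(ℓ - z) u = g`. -/
def IsSLSol (T : Set ℝ) (μ : Measure ℝ) (p r q : ℝ → ℂ) (z : ℂ) (g : ℝ → ℂ)
    (u u1 : ℝ → ℂ) : Prop :=
  IsPair T μ p u u1 (fun t => (q t - z * r t) * u t - r t * g t)

/-- Wronskian of two pairs. -/
def Wr (u u1 v v1 : ℝ → ℂ) (x : ℝ) : ℂ := u x * v1 x - u1 x * v x

/-- The integrand `|u|² r` as an `ℝ≥0∞`-valued function. -/
noncomputable def sqWeight (r : ℝ → ℝ) (u : ℝ → ℂ) (t : ℝ) : ℝ≥0∞ :=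
  ((‖u t‖₊ : ℝ≥0∞)) ^ 2 * ENNReal.ofReal (r t)

/-- `u` lies in `L²` near the left endpoint `a`. -/
def L2NearLeft (T : Set ℝ) (μ : Measure ℝ) (r : ℝ → ℝ) (u : ℝ → ℂ) : Prop :=
  ∀ c ∈ tsKappa T, ∫⁻ t in {t | (∃ s ∈ T, s < t) ∧ t ≤ c} ∩ tsKappa T, sqWeight r u t ∂μ < ∞

/-- `u` lies in `L²` near the right endpoint `b`. -/
def L2NearRight (T : Set ℝ) (μ : Measure ℝ) (r : ℝ → ℝ) (u : ℝ → ℂ) : Prop :=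
  ∀ c ∈ tsKappa T, ∫⁻ t in {t | c ≤ t ∧ ∃ s ∈ T, t < s} ∩ tsKappa T, sqWeight r u t ∂μ < ∞

/-- `ℓ` is in the limit-circle case at the left endpoint. -/
def LimitCircleLeft (T : Set ℝ) (μ : Measure ℝ) (p r q : ℝ → ℝ) : Prop :=
  ∀ z : ℂ, ∀ u u1 : ℝ → ℂ, IsSLSol T μ (cR p) (cR r) (cR q) z 0 u u1 → L2NearLeft T μ r u

/-- `ℓ` is in the limit-point case at the left endpoint. -/
def LimitPointLeft (T : Set ℝ) (μ : Measure ℝ) (p r q : ℝ → ℝ) : Prop :=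
  ∀ z : ℂ, ∃ u u1 : ℝ → ℂ, IsSLSol T μ (cR p) (cR r) (cR q) z 0 u u1 ∧ ¬ L2NearLeft T μ r u

/-- `ℓ` is in the limit-circle case at the right endpoint. -/
def LimitCircleRight (T : Set ℝ) (μ : Measure ℝ) (p r q : ℝ → ℝ) : Prop :=
  ∀ z : ℂ, ∀ u u1 : ℝ → ℂ, IsSLSol T μ (cR p) (cR r) (cR q) z 0 u u1 → L2NearRight T μ r u

/-- `ℓ` is in the limit-point case at the right endpoint. -/
def LimitPointRight (T : Set ℝ) (μ : Measure ℝ) (p r q : ℝ → ℝ) : Prop :=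
  ∀ z : ℂ, ∃ u u1 : ℝ → ℂ, IsSLSol T μ (cR p) (cR r) (cR q) z 0 u u1 ∧ ¬ L2NearRight T μ r u

/-- The action `ℓ u = (-h + q u)/r` of the differential expression on a pair with density `h`. -/
noncomputable def ellApply (r q : ℝ → ℝ) (h u : ℝ → ℂ) (t : ℝ) : ℂ :=
  (-h t + (q t : ℂ) * u t) / (r t : ℂ)

/-- Membership in `L²(𝕋_κ; r dσ_κ)`. -/
def MemL2T (T : Set ℝ) (μ : Measure ℝ) (r : ℝ → ℝ) (u : ℝ → ℂ) : Prop :=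
  ∫⁻ t in tsKappa T, sqWeight r u t ∂μ < ∞

/-- The pair `(u, u^[1])` with density `h` belongs to `D_ℓ²`. -/
def MemD2 (T : Set ℝ) (μ : Measure ℝ) (p r q : ℝ → ℝ) (u u1 h : ℝ → ℂ) : Prop :=
  LocallyIntegrable h μ ∧ IsPair T μ (cR p) u u1 h ∧ MemL2T T μ r u ∧
    MemL2T T μ r (ellApply r q h u)

/-- The filter `x ↓ a`, `x ∈ 𝕋`. -/
noncomputable def leftLimFilter (T : Set ℝ) : Filter ℝ :=
  if BddBelow T then nhdsWithin (sInf T) T else Filter.atBot ⊓ Filter.principal T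

/-- The filter `x ↑ b`, `x ∈ 𝕋`. -/
noncomputable def rightLimFilter (T : Set ℝ) : Filter ℝ :=
  if BddAbove T then nhdsWithin (sSup T) T else Filter.atTop ⊓ Filter.principal T

/-- The measure `r dσ_κ` on `𝕋_κ`, giving the Hilbert space `L²(𝕋_κ; r dσ_κ)`. -/
noncomputable def wM (T : Set ℝ) (μ : Measure ℝ) (r : ℝ → ℝ) : Measure ℝ :=
  (μ.restrict (tsKappa T)).withDensity fun t => ENNReal.ofReal (r t)


lemma SLaux_prim_meas (μ : Measure ℝ) [SFinite μ] {h : ℝ → ℂ} (hh : AEStronglyMeasurable h μ)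
    (c : ℝ) : StronglyMeasurable (fun t => ∫ y in c..t, h y ∂μ) := by
  have e : (fun t => ∫ y in c..t, h y ∂μ) = fun t =>
      (∫ y, (Ioc c t).indicator (hh.mk h) y ∂μ) - ∫ y, (Ioc t c).indicator (hh.mk h) y ∂μ := by
    funext t
    rw [intervalIntegral, integral_indicator measurableSet_Ioc,
      integral_indicator measurableSet_Ioc]
    congr 1
    · exact integral_congr_ae (ae_restrict_of_ae hh.ae_eq_mk)
    · exact integral_congr_ae (ae_restrict_of_ae hh.ae_eq_mk)
  rw [e]
  have m1 : StronglyMeasurable (fun x : ℝ × ℝ => hh.mk h x.2) :=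
    hh.stronglyMeasurable_mk.comp_measurable measurable_snd
  refine StronglyMeasurable.sub ?_ ?_
  · have : StronglyMeasurable (fun x : ℝ × ℝ => (Ioc c x.1).indicator (hh.mk h) x.2) := by
      have s1 : MeasurableSet {x : ℝ × ℝ | c < x.2 ∧ x.2 ≤ x.1} :=
        (measurableSet_lt measurable_const measurable_snd).inter
          (measurableSet_le measurable_snd measurable_fst)
      have := m1.indicator s1
      convert this using 2
      simp only [indicator_apply, mem_Ioc, mem_ofPred_eq]
    exact this.integral_prod_right'
  · have : StronglyMeasurable (fun x : ℝ × ℝ => (Ioc x.1 c).indicator (hh.mk h) x.2) := by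
      have s1 : MeasurableSet {x : ℝ × ℝ | x.1 < x.2 ∧ x.2 ≤ c} :=
        (measurableSet_lt measurable_fst measurable_snd).inter
          (measurableSet_le measurable_snd measurable_const)
      have := m1.indicator s1
      convert this using 2
      simp only [indicator_apply, mem_Ioc, mem_ofPred_eq]
    exact this.integral_prod_right'

lemma SLaux_prim_bound (μ : Measure ℝ) {h : ℝ → ℂ} (hh : Integrable h μ)
    (c t : ℝ) : ‖∫ y in c..t, h y ∂μ‖ ≤ ∫ y, ‖h y‖ ∂μ :=
  intervalIntegral.norm_integral_le_integral_norm_uIoc.trans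
    (setIntegral_le_integral hh.norm (ae_of_all _ fun _ => norm_nonneg _))

lemma SLaux_bdd_int {w v : ℝ → ℂ} (μ : Measure ℝ) (hw : Integrable w μ) (hv : AEStronglyMeasurable v μ)
    (C : ℝ) (hC : ∀ x, ‖v x‖ ≤ C) : Integrable (fun t => w t * v t) μ := by
  have := hw.bdd_mul hv (ae_of_all _ hC)
  simpa [mul_comm] using this

lemma SLaux_local_exists (μ : Measure ℝ) [SFinite μ] {w s f : ℝ → ℂ} (hw : Integrable w)
    (hs : Integrable s μ) (hf : Integrable f μ)
    (hk : (∫ t, ‖w t‖) * (∫ t, ‖s t‖ ∂μ) ≤ 1 / 2) (c : ℝ) (d₁ d₂ : ℂ) :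
    ∃ u : BoundedContinuousFunction ℝ ℂ, ∀ x, u x = d₁ + ∫ t in c..x, w t *
      (d₂ + ∫ y in c..t, (s y * u y - f y) ∂μ) := by
  have hsu : ∀ u : BoundedContinuousFunction ℝ ℂ, Integrable (fun y => s y * u y) μ := fun u =>
    SLaux_bdd_int μ hs u.continuous.aestronglyMeasurable ‖u‖ u.norm_coe_le_norm
  have hI : ∀ u : BoundedContinuousFunction ℝ ℂ, Integrable (fun y => s y * u y - f y) μ := fun u =>
    (hsu u).sub hf
  have hJ : ∀ u : BoundedContinuousFunction ℝ ℂ, Integrable (fun t => w t *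
      (d₂ + ∫ y in c..t, (s y * u y - f y) ∂μ)) := fun u => by
    refine SLaux_bdd_int _ hw ?_ (‖d₂‖ + ∫ y, ‖s y * u y - f y‖ ∂μ) ?_
    · exact (stronglyMeasurable_const.add
        (SLaux_prim_meas μ (hI u).aestronglyMeasurable c)).aestronglyMeasurable
    · intro x
      exact (norm_add_le _ _).trans (by gcongr; exact SLaux_prim_bound μ (hI u) c x)
  let F : BoundedContinuousFunction ℝ ℂ → BoundedContinuousFunction ℝ ℂ := fun u =>
    BoundedContinuousFunction.ofNormedAddCommGroup
      (fun x => d₁ + ∫ t in c..x, w t * (d₂ + ∫ y in c..t, (s y * u y - f y) ∂μ))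
      (continuous_const.add (intervalIntegral.continuous_primitive
        (fun a b => (hJ u).intervalIntegrable) c))
      (‖d₁‖ + ∫ t, ‖w t * (d₂ + ∫ y in c..t, (s y * u y - f y) ∂μ)‖)
      (fun x => (norm_add_le _ _).trans (by gcongr; exact SLaux_prim_bound _ (hJ u) c x))
  have hF : ∀ u x, F u x = d₁ + ∫ t in c..x, w t * (d₂ + ∫ y in c..t, (s y * u y - f y) ∂μ) :=
    fun u x => rfl
  have hL : ContractingWith (1 / 2) F := by
    refine ⟨by norm_num, LipschitzWith.of_dist_le_mul fun u v => ?_⟩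
    rw [BoundedContinuousFunction.dist_le (by positivity)]
    intro x
    rw [dist_eq_norm, hF, hF, add_sub_add_left_eq_sub,
      ← intervalIntegral.integral_sub (hJ u).intervalIntegrable (hJ v).intervalIntegrable]
    have key : ∀ t, ‖w t * (d₂ + ∫ y in c..t, (s y * u y - f y) ∂μ) -
        w t * (d₂ + ∫ y in c..t, (s y * v y - f y) ∂μ)‖ ≤
        ‖w t‖ * ((∫ t, ‖s t‖ ∂μ) * dist u v) := by
      intro t
      rw [← mul_sub, norm_mul, add_sub_add_left_eq_sub,
        ← intervalIntegral.integral_sub (hI u).intervalIntegrable (hI v).intervalIntegrable]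
      gcongr
      refine (SLaux_prim_bound μ ((hI u).sub (hI v)) c t).trans ?_
      rw [← integral_mul_const]
      refine integral_mono ((hI u).sub (hI v)).norm (hs.norm.mul_const _) fun y => ?_
      have : s y * u y - f y - (s y * v y - f y) = s y * (u y - v y) := by ring
      simp only [Pi.sub_apply]
      rw [this, norm_mul, ← dist_eq_norm]
      gcongr
      exact BoundedContinuousFunction.dist_coe_le_dist y
    refine (SLaux_prim_bound _ ((hJ u).sub (hJ v)) c x).trans ?_
    refine (integral_mono ((hJ u).sub (hJ v)).norm (hw.norm.mul_const _) key).trans ?_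
    rw [integral_mul_const, ← mul_assoc]
    gcongr
    simpa using hk
  exact ⟨ContractingWith.fixedPoint F hL, fun x => by
    conv_lhs => rw [← hL.fixedPoint_isFixedPt]
    exact hF _ _⟩

/-- solution on a compact interval -/
def SLauxSol (μ : Measure ℝ) (w s f : ℝ → ℂ) (A B : ℝ) (u u1 : ℝ → ℂ) : Prop :=
  IntegrableOn (fun t => w t * u1 t) (Ioc A B) ∧
  IntegrableOn (fun t => s t * u t - f t) (Ioc A B) μ ∧
  ∀ x ∈ Icc A B, ∀ y ∈ Icc A B, u y = u x + ∫ t in x..y, w t * u1 t ∧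
    u1 y = u1 x + ∫ t in x..y, (s t * u t - f t) ∂μ

lemma SLaux_ii {μ : Measure ℝ} {h : ℝ → ℂ} {A B x y : ℝ} (hh : IntegrableOn h (Ioc A B) μ)
    (hx : x ∈ Icc A B) (hy : y ∈ Icc A B) : IntervalIntegrable h μ x y := by
  rw [intervalIntegrable_iff]
  refine hh.mono_set ?_
  rw [uIoc]
  exact Ioc_subset_Ioc (le_min hx.1 hy.1) (max_le hx.2 hy.2)

lemma SLaux_base {μ : Measure ℝ} {w s f : ℝ → ℂ} {A B c : ℝ} {u u1 : ℝ → ℂ} (hc : c ∈ Icc A B)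
    (h1 : IntegrableOn (fun t => w t * u1 t) (Ioc A B))
    (h2 : IntegrableOn (fun t => s t * u t - f t) (Ioc A B) μ)
    (h3 : ∀ y ∈ Icc A B, u y = u c + ∫ t in c..y, w t * u1 t ∧
    u1 y = u1 c + ∫ t in c..y, (s t * u t - f t) ∂μ) : SLauxSol μ w s f A B u u1 := by
  refine ⟨h1, h2, fun x hx y hy => ⟨?_, ?_⟩⟩
  · rw [(h3 y hy).1, (h3 x hx).1, add_assoc, intervalIntegral.integral_add_adjacent_intervals
      (SLaux_ii h1 hc hx) (SLaux_ii h1 hx hy)]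
  · rw [(h3 y hy).2, (h3 x hx).2, add_assoc, intervalIntegral.integral_add_adjacent_intervals
      (SLaux_ii h2 hc hx) (SLaux_ii h2 hx hy)]

lemma SLaux_sub {μ : Measure ℝ} {w s f : ℝ → ℂ} {A B A' B' : ℝ} {u u1 : ℝ → ℂ}
    (h : SLauxSol μ w s f A B u u1) (hA : A ≤ A') (hB : B' ≤ B) :
    SLauxSol μ w s f A' B' u u1 :=
  ⟨h.1.mono_set (Ioc_subset_Ioc hA hB), h.2.1.mono_set (Ioc_subset_Ioc hA hB),
    fun x hx y hy => h.2.2 x ⟨hA.trans hx.1, hx.2.trans hB⟩ y ⟨hA.trans hy.1, hy.2.trans hB⟩⟩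

lemma SLaux_congr {μ : Measure ℝ} {w s f : ℝ → ℂ} {A B : ℝ} {u u1 v v1 : ℝ → ℂ}
    (h : SLauxSol μ w s f A B u u1) (e : ∀ x ∈ Icc A B, u x = v x ∧ u1 x = v1 x) :
    SLauxSol μ w s f A B v v1 := by
  have e1 : ∀ x ∈ Icc A B, ∀ y ∈ Icc A B, ∀ t ∈ uIoc x y, t ∈ Icc A B := by
    intro x hx y hy t ht
    rw [uIoc] at ht
    exact ⟨(le_min hx.1 hy.1).trans ht.1.le, ht.2.trans (max_le hx.2 hy.2)⟩
  refine ⟨h.1.congr_fun (fun t ht => ?_) measurableSet_Ioc,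
    h.2.1.congr_fun (fun t ht => ?_) measurableSet_Ioc, fun x hx y hy => ?_⟩
  · simp only; rw [(e t (Ioc_subset_Icc_self ht)).2]
  · simp only; rw [(e t (Ioc_subset_Icc_self ht)).1]
  · have := h.2.2 x hx y hy
    rw [← (e x hx).1, ← (e y hy).1, ← (e x hx).2, ← (e y hy).2]
    refine ⟨this.1.trans ?_, this.2.trans ?_⟩
    · congr 1
      refine intervalIntegral.integral_congr_ae (ae_of_all _ fun t ht => ?_)
      rw [(e t (e1 x hx y hy t ht)).2]
    · congr 1
      refine intervalIntegral.integral_congr_ae (ae_of_all _ fun t ht => ?_)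
      rw [(e t (e1 x hx y hy t ht)).1]

lemma SLaux_glue {μ : Measure ℝ} {w s f : ℝ → ℂ} {A B C : ℝ} {u u1 : ℝ → ℂ} (hAB : A ≤ B)
    (hBC : B ≤ C)
    (h : SLauxSol μ w s f A B u u1) (h' : SLauxSol μ w s f B C u u1) :
    SLauxSol μ w s f A C u u1 := by
  have hB1 : B ∈ Icc A B := ⟨hAB, le_rfl⟩
  have hB2 : B ∈ Icc B C := ⟨le_rfl, hBC⟩
  refine SLaux_base (c := B) ⟨hAB, hBC⟩ ?_ ?_ ?_
  · rw [← Ioc_union_Ioc_eq_Ioc hAB hBC]; exact h.1.union h'.1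
  · rw [← Ioc_union_Ioc_eq_Ioc hAB hBC]; exact h.2.1.union h'.2.1
  · intro y hy
    rcases le_total y B with hyB | hyB
    · exact h.2.2 B hB1 y ⟨hy.1, hyB⟩
    · exact h'.2.2 B hB2 y ⟨hyB, hy.2⟩

/-- well-posedness on a compact interval -/
def SLauxP (μ : Measure ℝ) (w s f : ℝ → ℂ) (A B : ℝ) : Prop :=
  ∀ c ∈ Icc A B, (∀ d₁ d₂ : ℂ, ∃ u u1, SLauxSol μ w s f A B u u1 ∧ u c = d₁ ∧ u1 c = d₂) ∧
    ∀ u u1 v v1, SLauxSol μ w s f A B u u1 → SLauxSol μ w s f A B v v1 → u c = v c → u1 c = v1 c →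
      ∀ x ∈ Icc A B, u x = v x ∧ u1 x = v1 x

lemma SLauxP_glue {μ : Measure ℝ} {w s f : ℝ → ℂ} {A B C : ℝ} (hAB : A ≤ B)
    (hBC : B ≤ C) (h : SLauxP μ w s f A B) (h' : SLauxP μ w s f B C) : SLauxP μ w s f A C := by
  have hB1 : B ∈ Icc A B := ⟨hAB, le_rfl⟩
  have hB2 : B ∈ Icc B C := ⟨le_rfl, hBC⟩
  -- gluing of two solutions that agree at `B`
  have G : ∀ u u1 v v1, SLauxSol μ w s f A B u u1 → SLauxSol μ w s f B C v v1 → u B = v B →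
      u1 B = v1 B → ∃ U U1, SLauxSol μ w s f A C U U1 ∧ (∀ x ∈ Icc A B, u x = U x ∧ u1 x = U1 x) ∧
        (∀ x ∈ Icc B C, v x = U x ∧ v1 x = U1 x) := by
    intro u u1 v v1 hu hv e e1
    have E1 : ∀ x ∈ Icc A B, u x = (fun x => if x ≤ B then u x else v x) x ∧
        u1 x = (fun x => if x ≤ B then u1 x else v1 x) x := by
      intro x hx; simp [hx.2]
    have E2 : ∀ x ∈ Icc B C, v x = (fun x => if x ≤ B then u x else v x) x ∧
        v1 x = (fun x => if x ≤ B then u1 x else v1 x) x := by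
      intro x hx
      rcases hx.1.eq_or_lt with rfl | hlt
      · simp [e, e1]
      · simp [not_le.2 hlt]
    exact ⟨_, _, SLaux_glue hAB hBC (SLaux_congr hu E1) (SLaux_congr hv E2), E1, E2⟩
  intro c hc
  rcases le_total c B with hcB | hcB
  · have hc' : c ∈ Icc A B := ⟨hc.1, hcB⟩
    refine ⟨fun d₁ d₂ => ?_, fun u u1 v v1 hu hv e e1 => ?_⟩
    · obtain ⟨u, u1, hu, k1, k2⟩ := (h c hc').1 d₁ d₂
      obtain ⟨v, v1, hv, l1, l2⟩ := (h' B hB2).1 (u B) (u1 B)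
      obtain ⟨U, U1, hU, m1, m2⟩ := G u u1 v v1 hu hv l1.symm l2.symm
      exact ⟨U, U1, hU, (m1 c hc').1 ▸ k1, (m1 c hc').2 ▸ k2⟩
    · have q := (h c hc').2 u u1 v v1 (SLaux_sub hu le_rfl hBC) (SLaux_sub hv le_rfl hBC) e e1
      have q' := (h' B hB2).2 u u1 v v1 (SLaux_sub hu hAB le_rfl) (SLaux_sub hv hAB le_rfl)
        (q B hB1).1 (q B hB1).2
      intro x hx
      rcases le_total x B with hxB | hxB
      · exact q x ⟨hx.1, hxB⟩
      · exact q' x ⟨hxB, hx.2⟩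
  · have hc' : c ∈ Icc B C := ⟨hcB, hc.2⟩
    refine ⟨fun d₁ d₂ => ?_, fun u u1 v v1 hu hv e e1 => ?_⟩
    · obtain ⟨v, v1, hv, k1, k2⟩ := (h' c hc').1 d₁ d₂
      obtain ⟨u, u1, hu, l1, l2⟩ := (h B hB1).1 (v B) (v1 B)
      obtain ⟨U, U1, hU, m1, m2⟩ := G u u1 v v1 hu hv l1 l2
      exact ⟨U, U1, hU, (m2 c hc').1 ▸ k1, (m2 c hc').2 ▸ k2⟩
    · have q' := (h' c hc').2 u u1 v v1 (SLaux_sub hu hAB le_rfl) (SLaux_sub hv hAB le_rfl) e e1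
      have q := (h B hB1).2 u u1 v v1 (SLaux_sub hu le_rfl hBC) (SLaux_sub hv le_rfl hBC)
        (q' B hB2).1 (q' B hB2).2
      intro x hx
      rcases le_total x B with hxB | hxB
      · exact q x ⟨hx.1, hxB⟩
      · exact q' x ⟨hxB, hx.2⟩

lemma SLauxP_local {μ : Measure ℝ} [SFinite μ] {w s f : ℝ → ℂ} {A B : ℝ}
    (hw : IntegrableOn w (Ioc A B)) (hs : IntegrableOn s (Ioc A B) μ)
    (hf : IntegrableOn f (Ioc A B) μ)
    (hk : (∫ t in Ioc A B, ‖w t‖) * (∫ t in Ioc A B, ‖s t‖ ∂μ) ≤ 1 / 2) :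
    SLauxP μ w s f A B := by
  have sub : ∀ x ∈ Icc A B, ∀ y ∈ Icc A B, uIoc x y ⊆ Ioc A B := by
    intro x hx y hy
    rw [uIoc]
    exact Ioc_subset_Ioc (le_min hx.1 hy.1) (max_le hx.2 hy.2)
  intro c hc
  refine ⟨fun d₁ d₂ => ?_, fun u u1 v v1 hu hv e e1 => ?_⟩
  · have hw' := hw.integrable_indicator measurableSet_Ioc
    have hs' := hs.integrable_indicator measurableSet_Ioc
    have hf' := hf.integrable_indicator measurableSet_Ioc
    obtain ⟨u, hu⟩ := SLaux_local_exists μ hw' hs' hf' (by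
      simp only [norm_indicator_eq_indicator_norm]
      rw [integral_indicator measurableSet_Ioc, integral_indicator measurableSet_Ioc]
      exact hk) c d₁ d₂
    set s' := (Ioc A B).indicator s with hs'd
    set w' := (Ioc A B).indicator w with hw'd
    set f' := (Ioc A B).indicator f with hf'd
    have es : ∀ t ∈ Ioc A B, s' t = s t := fun t ht => indicator_of_mem ht _
    have ew : ∀ t ∈ Ioc A B, w' t = w t := fun t ht => indicator_of_mem ht _
    have ef : ∀ t ∈ Ioc A B, f' t = f t := fun t ht => indicator_of_mem ht _
    have hI : Integrable (fun y => s' y * u y - f' y) μ :=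
      (SLaux_bdd_int μ hs' u.continuous.aestronglyMeasurable ‖u‖ u.norm_coe_le_norm).sub hf'
    set u1 : ℝ → ℂ := fun t => d₂ + ∫ y in c..t, (s' y * u y - f' y) ∂μ with hu1
    have hJ : Integrable (fun t => w' t * u1 t) := by
      refine SLaux_bdd_int _ hw' ?_ (‖d₂‖ + ∫ y, ‖s' y * u y - f' y‖ ∂μ) ?_
      · exact (stronglyMeasurable_const.add
          (SLaux_prim_meas μ hI.aestronglyMeasurable c)).aestronglyMeasurable
      · intro x
        exact (norm_add_le _ _).trans (by gcongr; exact SLaux_prim_bound μ hI c x)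
    have uc : u c = d₁ := by rw [hu c]; simp
    have u1c : u1 c = d₂ := by simp [hu1]
    refine ⟨u, u1, SLaux_base hc ?_ ?_ ?_, uc, u1c⟩
    · refine hJ.integrableOn.congr_fun (fun t ht => ?_) measurableSet_Ioc
      simp only; rw [ew t ht]
    · refine hI.integrableOn.congr_fun (fun t ht => ?_) measurableSet_Ioc
      simp only; rw [es t ht, ef t ht]
    · intro y hy
      rw [uc, u1c]
      constructor
      · rw [hu y]
        congr 1
        refine intervalIntegral.integral_congr_ae (ae_of_all _ fun t ht => ?_)
        rw [ew t (sub c hc y hy ht)]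
      · simp only [hu1]
        congr 1
        refine intervalIntegral.integral_congr_ae (ae_of_all _ fun t ht => ?_)
        rw [es t (sub c hc y hy ht), ef t (sub c hc y hy ht)]
  · have cont : ∀ u u1, SLauxSol μ w s f A B u u1 → ContinuousOn u (Icc A B) := by
      intro u u1 hu
      have hAB : A ≤ B := hc.1.trans hc.2
      have := intervalIntegral.continuousOn_primitive_interval' (a := c)
        (SLaux_ii hu.1 (left_mem_Icc.2 hAB) (right_mem_Icc.2 hAB)) (by rwa [uIcc_of_le hAB])
      rw [uIcc_of_le hAB] at this
      refine (continuousOn_const (c := u c)|>.add this).congr fun x hx => ?_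
      exact (hu.2.2 c hc x hx).1
    obtain ⟨x0, hx0, hmax⟩ := isCompact_Icc.exists_isMaxOn ⟨c, hc⟩
      ((cont u u1 hu).sub (cont v v1 hv)).norm
    set M := ‖u x0 - v x0‖ with hM
    have hle : ∀ x ∈ Icc A B, ‖u x - v x‖ ≤ M := fun x hx => hmax hx
    set S := ∫ t in Ioc A B, ‖s t‖ ∂μ with hS
    set W := ∫ t in Ioc A B, ‖w t‖ with hW
    have b1 : ∀ x ∈ Icc A B, ‖u1 x - v1 x‖ ≤ S * M := by
      intro x hx
      rw [(hu.2.2 c hc x hx).2, (hv.2.2 c hc x hx).2, e1, add_sub_add_left_eq_sub,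
        ← intervalIntegral.integral_sub (SLaux_ii hu.2.1 hc hx) (SLaux_ii hv.2.1 hc hx)]
      refine intervalIntegral.norm_integral_le_integral_norm_uIoc.trans ?_
      have i0 : IntegrableOn (fun t => ‖s t * u t - f t - (s t * v t - f t)‖) (Ioc A B) μ :=
        (hu.2.1.sub hv.2.1).norm
      refine (setIntegral_mono_set i0 (ae_of_all _ fun _ => norm_nonneg _)
        (ae_of_all _ (sub c hc x hx))).trans ?_
      rw [hS, ← integral_mul_const]
      refine setIntegral_mono_on i0 (hs.norm.mul_const _) measurableSet_Ioc fun t ht => ?_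
      have : s t * u t - f t - (s t * v t - f t) = s t * (u t - v t) := by ring
      rw [this, norm_mul]
      gcongr
      exact hle t (Ioc_subset_Icc_self ht)
    have b2 : M ≤ W * (S * M) := by
      have eM : M = ‖∫ t in c..x0, (w t * u1 t - w t * v1 t)‖ := by
        rw [hM, (hu.2.2 c hc x0 hx0).1, (hv.2.2 c hc x0 hx0).1, e, add_sub_add_left_eq_sub,
          ← intervalIntegral.integral_sub (SLaux_ii hu.1 hc hx0) (SLaux_ii hv.1 hc hx0)]
      refine eM.le.trans ?_
      refine intervalIntegral.norm_integral_le_integral_norm_uIoc.trans ?_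
      have i0 : IntegrableOn (fun t => ‖w t * u1 t - w t * v1 t‖) (Ioc A B) :=
        (hu.1.sub hv.1).norm
      refine (setIntegral_mono_set i0 (ae_of_all _ fun _ => norm_nonneg _)
        (ae_of_all _ (sub c hc x0 hx0))).trans ?_
      rw [hW, ← integral_mul_const]
      refine setIntegral_mono_on i0 (hw.norm.mul_const _) measurableSet_Ioc fun t ht => ?_
      rw [← mul_sub, norm_mul]
      gcongr
      exact b1 t (Ioc_subset_Icc_self ht)
    have M0 : 0 ≤ M := norm_nonneg _
    have M1 : M = 0 := by
      have : W * (S * M) ≤ 1 / 2 * M := by rw [← mul_assoc]; gcongr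
      linarith
    intro x hx
    have q1 := hle x hx
    have q2 := b1 x hx
    rw [M1] at q1 q2
    rw [mul_zero] at q2
    exact ⟨sub_eq_zero.1 (norm_le_zero_iff.1 q1), sub_eq_zero.1 (norm_le_zero_iff.1 q2)⟩

lemma SLauxP_all {μ : Measure ℝ} [SFinite μ] {w s f : ℝ → ℂ}
    (hw : ∀ A B, IntegrableOn w (Ioc A B)) (hs : ∀ A B, IntegrableOn s (Ioc A B) μ)
    (hf : ∀ A B, IntegrableOn f (Ioc A B) μ) (A0 B0 : ℝ) (h0 : A0 ≤ B0) :
    SLauxP μ w s f A0 B0 := by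
  have hwi : ∀ x y, IntervalIntegrable (fun t => ‖w t‖) volume x y := fun x y => by
    rw [intervalIntegrable_iff, uIoc]; exact (hw _ _).norm
  set S := ∫ t in Ioc A0 B0, ‖s t‖ ∂μ with hS
  have S0 : 0 ≤ S := integral_nonneg fun _ => norm_nonneg _
  have hc : Continuous (fun x => ∫ t in A0..x, ‖w t‖) :=
    intervalIntegral.continuous_primitive hwi A0
  have huc := isCompact_Icc.uniformContinuousOn_of_continuous (hc.continuousOn (s := Icc A0 B0))
  rw [Metric.uniformContinuousOn_iff] at huc
  obtain ⟨δ, hδ, H⟩ := huc (1 / (2 * (S + 1))) (by positivity)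
  have loc : ∀ A B, A0 ≤ A → A ≤ B → B ≤ B0 → B - A < δ → SLauxP μ w s f A B := by
    intro A B h1 h2 h3 h4
    refine SLauxP_local (hw _ _) (hs _ _) (hf _ _) ?_
    have k := H B ⟨h1.trans h2, h3⟩ A ⟨h1, h2.trans h3⟩ (by
      rw [Real.dist_eq, abs_of_nonneg (by linarith)]; exact h4)
    rw [Real.dist_eq, intervalIntegral.integral_interval_sub_left (hwi _ _) (hwi _ _),
      intervalIntegral.integral_of_le h2] at k
    have k1 : (∫ t in Ioc A B, ‖s t‖ ∂μ) ≤ S :=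
      setIntegral_mono_set (hs _ _).norm (ae_of_all _ fun _ => norm_nonneg _)
        (ae_of_all _ (Ioc_subset_Ioc h1 h3))
    have k2 := (le_abs_self _).trans k.le
    calc _ ≤ 1 / (2 * (S + 1)) * S := by
          gcongr
      _ ≤ 1 / 2 := by
          rw [div_mul_eq_mul_div, div_le_div_iff₀ (by positivity) (by norm_num)]
          linarith
  have ind : ∀ n : ℕ, ∀ A B, A0 ≤ A → A ≤ B → B ≤ B0 → B - A ≤ n * (δ / 2) →
      SLauxP μ w s f A B := by
    intro n
    induction n with
    | zero =>
      intro A B h1 h2 h3 h4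
      exact loc A B h1 h2 h3 (by simp at h4; linarith)
    | succ n ih =>
      intro A B h1 h2 h3 h4
      push_cast at h4
      by_cases h5 : B - A < δ
      · exact loc A B h1 h2 h3 h5
      · push Not at h5
        exact SLauxP_glue (B := B - δ / 2) (by linarith) (by linarith)
          (ih _ _ h1 (by linarith) (by linarith) (by linarith))
          (loc _ _ (by linarith) (by linarith) h3 (by linarith))
  obtain ⟨n, hn⟩ := exists_nat_ge ((B0 - A0) / (δ / 2))
  refine ind n A0 B0 le_rfl h0 le_rfl ?_
  rwa [div_le_iff₀ (by positivity)] at hn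

lemma SLaux_global {μ : Measure ℝ} {w s f : ℝ → ℂ}
    (hP : ∀ A B, A ≤ B → SLauxP μ w s f A B) (c : ℝ) (d₁ d₂ : ℂ) :
    ∃ u u1, (∀ A B, SLauxSol μ w s f A B u u1) ∧ u c = d₁ ∧ u1 c = d₂ := by
  have mem : ∀ N : ℕ, c ∈ Icc (c - N) (c + N) := fun N =>
    ⟨by have : (0:ℝ) ≤ N := N.cast_nonneg
        linarith, by have : (0:ℝ) ≤ N := N.cast_nonneg
                     linarith⟩
  choose U U1 hU e e1 using fun N : ℕ =>
    ((hP (c - N) (c + N) ((mem N).1.trans (mem N).2)) c (mem N)).1 d₁ d₂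
  have key : ∀ N : ℕ, ∀ x ∈ Icc (c - N) (c + N), U N x = (fun x => U ⌈|x - c|⌉₊ x) x ∧
      U1 N x = (fun x => U1 ⌈|x - c|⌉₊ x) x := by
    intro N x hx
    have hM : ⌈|x - c|⌉₊ ≤ N := Nat.ceil_le.2 (abs_le.2 ⟨by linarith [hx.1], by linarith [hx.2]⟩)
    have hM' : ((⌈|x - c|⌉₊ : ℕ) : ℝ) ≤ N := by exact_mod_cast hM
    have hx' := abs_le.1 (Nat.le_ceil |x - c|)
    set M := ⌈|x - c|⌉₊
    exact ((hP (c - M) (c + M) ((mem M).1.trans (mem M).2)) c (mem M)).2 _ _ _ _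
      (SLaux_sub (hU N) (by linarith) (by linarith)) (hU M) ((e N).trans (e M).symm)
      ((e1 N).trans (e1 M).symm) x ⟨by linarith, by linarith⟩
  refine ⟨fun x => U ⌈|x - c|⌉₊ x, fun x => U1 ⌈|x - c|⌉₊ x, fun A B => ?_, (key 0 c (mem 0)).1.symm.trans (e 0),
    (key 0 c (mem 0)).2.symm.trans (e1 0)⟩
  obtain ⟨N, hN⟩ := exists_nat_ge (max (c - A) (B - c))
  have h1 := (le_max_left _ _).trans hN
  have h2 := (le_max_right _ _).trans hN
  exact SLaux_sub (SLaux_congr (hU N) (key N)) (by linarith) (by linarith)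

/-- the projection onto `𝕋_κ` used for `p̄` -/
noncomputable def SLauxPhi (K : Set ℝ) (t : ℝ) : ℝ :=
  if (K ∩ Ici t).Nonempty then sInf (K ∩ Ici t) else sSup K

lemma SLaux_extK (T : Set ℝ) (p : ℝ → ℂ) (t : ℝ) : extK T p t = p (SLauxPhi (tsKappa T) t) := by
  unfold extK SLauxPhi tsSigma
  set K := tsKappa T
  by_cases h : t ∈ K
  · have h1 : (K ∩ Ici t).Nonempty := ⟨t, h, self_mem_Ici⟩
    rw [if_pos h, if_pos h1]
    congr 1
    have : IsLeast (K ∩ Ici t) t := ⟨⟨h, self_mem_Ici⟩, fun s hs => hs.2⟩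
    exact this.csInf_eq.symm
  · have : {s | s ∈ K ∧ t < s} = K ∩ Ici t := by
      ext s
      constructor
      · rintro ⟨a, b⟩; exact ⟨a, b.le⟩
      · rintro ⟨a, b⟩; exact ⟨a, lt_of_le_of_ne b (fun e => h (e ▸ a))⟩
    rw [if_neg h, this]

lemma SLaux_phi_mono (K : Set ℝ) : Monotone (SLauxPhi K) := by
  intro x y hxy
  unfold SLauxPhi
  have bd : ∀ t, BddBelow (K ∩ Ici t) := fun t => ⟨t, fun s hs => hs.2⟩
  by_cases hy : (K ∩ Ici y).Nonempty
  · have hs : K ∩ Ici y ⊆ K ∩ Ici x := fun s hs => ⟨hs.1, hxy.trans hs.2⟩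
    rw [if_pos hy, if_pos (hy.mono hs)]
    exact csInf_le_csInf (bd x) hy hs
  · rw [if_neg hy]
    split_ifs with hx
    · obtain ⟨s, hs⟩ := hx
      refine (csInf_le (bd x) hs).trans (le_csSup ⟨y, fun k hk => ?_⟩ hs.1)
      by_contra hc
      exact hy ⟨k, hk, (not_le.1 hc).le⟩
    · exact le_rfl

lemma SLaux_kappa_sub (T : Set ℝ) : tsKappa T ⊆ T := by
  unfold tsKappa
  split_ifs
  · exact sdiff_subset
  · exact subset_rfl

lemma SLaux_kappa_mem {T : Set ℝ} {s t : ℝ} (hs : s ∈ T) (ht : t ∈ T) (h : s < t) :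
    t ∈ tsKappa T := by
  unfold tsKappa
  split_ifs with hb
  · refine ⟨ht, fun e => ?_⟩
    have := csInf_le hb.1 hs
    rw [mem_singleton_iff] at e
    linarith
  · exact ht

lemma SLaux_phi_lt {T : Set ℝ} {t d : ℝ} (h1 : ∃ s ∈ T, s < t) (h2 : ∃ s ∈ T, t ≤ s) :
    SLauxPhi (tsKappa T) t < d ↔ ∃ s ∈ T, t ≤ s ∧ s < d := by
  obtain ⟨s, hs, hst⟩ := h1
  obtain ⟨s', hs', hst'⟩ := h2
  have ne : (tsKappa T ∩ Ici t).Nonempty := ⟨s', SLaux_kappa_mem hs hs' (hst.trans_le hst'), hst'⟩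
  rw [SLauxPhi, if_pos ne, csInf_lt_iff ⟨t, fun s hs => hs.2⟩ ne]
  constructor
  · rintro ⟨k, hk, hd⟩; exact ⟨k, SLaux_kappa_sub T hk.1, hk.2, hd⟩
  · rintro ⟨k, hk, hd, hd'⟩; exact ⟨k, ⟨SLaux_kappa_mem hs hk (hst.trans_le hd), hd⟩, hd'⟩

lemma SLaux_nu (T : Set ℝ) (hne : T.Nonempty) (ν : Measure ℝ)
    (hν : ∀ c d : ℝ, c ≤ d → ν (Set.Ico c d) = ENNReal.ofReal (tsRho T d - tsRho T c)) :
    ν = (volume.restrict {t | (∃ s ∈ T, s < t) ∧ ∃ s ∈ T, t ≤ s}).map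
      (SLauxPhi (tsKappa T)) := by
  refine Measure.ext_of_Ico' _ _ (fun {a b} hab => ?_) (fun {a b} hab => ?_)
  · rw [hν _ _ hab.le]; exact ENNReal.ofReal_ne_top
  rw [hν _ _ hab.le, Measure.map_apply (SLaux_phi_mono _).measurable measurableSet_Ico,
    Measure.restrict_apply ((SLaux_phi_mono _).measurable measurableSet_Ico)]
  refine le_antisymm ?_ ?_
  · rw [← Real.volume_Ioo]
    refine measure_mono fun t ht => ?_
    have h1 : ∃ s ∈ T, s < t := by
      have := ht.1
      unfold tsRho at this
      split_ifs at this with hc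
      · obtain ⟨s, hs⟩ := hc
        exact ⟨s, hs.1, (le_csSup ⟨a, fun k hk => hk.2.le⟩ hs).trans_lt this⟩
      · exact exists_lt_of_csInf_lt hne this
    have h3 : ∃ s ∈ T, t ≤ s ∧ s < b := by
      have := ht.2
      unfold tsRho at this
      split_ifs at this with hc
      · obtain ⟨s, hs, hts⟩ := exists_lt_of_lt_csSup hc this
        exact ⟨s, hs.1, hts.le, hs.2⟩
      · have h4 := ht.1
        have : ¬ ({s | s ∈ T ∧ s < a}).Nonempty := fun ⟨s, hs⟩ =>
          hc ⟨s, hs.1, hs.2.trans hab⟩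
        unfold tsRho at h4
        rw [if_neg this] at h4
        linarith
    have h2 : ∃ s ∈ T, t ≤ s := by
      obtain ⟨s, x, y, _⟩ := h3
      exact ⟨s, x, y⟩
    refine ⟨⟨?_, (SLaux_phi_lt h1 h2).2 h3⟩, h1, h2⟩
    by_contra hc
    obtain ⟨s, hs, hts, hsa⟩ := (SLaux_phi_lt h1 h2).1 (not_le.1 hc)
    have h4 := ht.1
    unfold tsRho at h4
    have nn : ({s | s ∈ T ∧ s < a}).Nonempty := ⟨s, hs, hsa⟩
    rw [if_pos nn] at h4
    have : s ≤ sSup {s | s ∈ T ∧ s < a} := le_csSup ⟨a, fun k hk => hk.2.le⟩ ⟨hs, hsa⟩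
    linarith
  · rw [← Real.volume_Icc]
    refine measure_mono fun t ht => ?_
    obtain ⟨⟨ha, hb⟩, h1, h2⟩ := ht
    constructor
    · by_contra hc
      rw [not_le] at hc
      unfold tsRho at hc
      split_ifs at hc with hn
      · obtain ⟨s, hs, hts⟩ := exists_lt_of_lt_csSup hn hc
        exact absurd ((SLaux_phi_lt h1 h2).2 ⟨s, hs.1, hts.le, hs.2⟩) (not_lt.2 ha)
      · obtain ⟨s, hs, hst⟩ := h1
        have : sInf T ≤ s := csInf_le ⟨a, fun k hk => by
          by_contra hka
          exact hn ⟨k, hk, not_le.1 hka⟩⟩ hs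
        linarith
    · obtain ⟨s, hs, hts, hsb⟩ := (SLaux_phi_lt h1 h2).1 hb
      unfold tsRho
      have nn : ({s | s ∈ T ∧ s < b}).Nonempty := ⟨s, hs, hsb⟩
      rw [if_pos nn]
      exact hts.trans (le_csSup ⟨b, fun k hk => hk.2.le⟩ ⟨hs, hsb⟩)

lemma SLaux_w_int (T : Set ℝ) (hne : T.Nonempty) (ν : Measure ℝ)
    (hν : ∀ c d : ℝ, c ≤ d → ν (Set.Ico c d) = ENNReal.ofReal (tsRho T d - tsRho T c))
    (p : ℝ → ℂ) (hp : LocallyIntegrable (fun t => 1 / p t) ν) (A B : ℝ) :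
    IntegrableOn (fun t => 1 / extK T p t) (Ioc A B) := by
  simp only [SLaux_extK]
  set K := tsKappa T with hK
  have hm := (SLaux_phi_mono K).measurable
  set S := {t : ℝ | (∃ s ∈ T, s < t) ∧ ∃ s ∈ T, t ≤ s} with hS
  have i1 : IntegrableOn (fun t => 1 / p (SLauxPhi K t)) (Ioc A B ∩ S) := by
    have h := hp.integrableOn_isCompact (isCompact_Icc (a := SLauxPhi K A) (b := SLauxPhi K B))
    rw [SLaux_nu T hne ν hν, IntegrableOn, Measure.restrict_map hm measurableSet_Icc] at h
    have h2 := h.comp_measurable hm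
    rw [Measure.restrict_restrict (hm measurableSet_Icc)] at h2
    refine IntegrableOn.mono_set h2 ?_
    exact fun t ht => ⟨⟨SLaux_phi_mono K ht.1.1.le, SLaux_phi_mono K ht.1.2⟩, ht.2⟩
  have i2 : IntegrableOn (fun t => 1 / p (SLauxPhi K t)) (Ioc A B ∩ {t | ∀ s ∈ T, t ≤ s}) := by
    have hc : OrdConnected {t : ℝ | ∀ s ∈ T, t ≤ s} :=
      ⟨fun x hx y hy z hz s hs => hz.2.trans (hy s hs)⟩
    have : IntegrableOn (fun _ : ℝ => 1 / p (if K.Nonempty then sInf K else sSup K))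
        (Ioc A B ∩ {t | ∀ s ∈ T, t ≤ s}) :=
      (integrableOn_const (by simp) (by simp)).mono_set (t := Ioc A B) inter_subset_left
    refine this.congr_fun (fun t ht => ?_) (measurableSet_Ioc.inter hc.measurableSet)
    have e : K ∩ Ici t = K := inter_eq_left.2 fun k hk => ht.2 k (SLaux_kappa_sub T hk)
    simp only [SLauxPhi, e]
  have i3 : IntegrableOn (fun t => 1 / p (SLauxPhi K t)) (Ioc A B ∩ {t | ∀ s ∈ T, s < t}) := by
    have hc : OrdConnected {t : ℝ | ∀ s ∈ T, s < t} :=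
      ⟨fun x hx y hy z hz s hs => (hx s hs).trans_le hz.1⟩
    have : IntegrableOn (fun _ : ℝ => 1 / p (sSup K))
        (Ioc A B ∩ {t | ∀ s ∈ T, s < t}) :=
      (integrableOn_const (by simp) (by simp)).mono_set (t := Ioc A B) inter_subset_left
    refine this.congr_fun (fun t ht => ?_) (measurableSet_Ioc.inter hc.measurableSet)
    have e : ¬ (K ∩ Ici t).Nonempty := fun ⟨k, hk⟩ =>
      absurd (ht.2 k (SLaux_kappa_sub T hk.1)) (not_lt.2 hk.2)
    simp only [SLauxPhi, if_neg e]
  refine ((i1.union i2).union i3).mono_set fun t ht => ?_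
  by_cases h1 : ∃ s ∈ T, s < t
  · by_cases h2 : ∃ s ∈ T, t ≤ s
    · exact Or.inl (Or.inl ⟨ht, h1, h2⟩)
    · push Not at h2
      exact Or.inr ⟨ht, h2⟩
  · push Not at h1
    exact Or.inl (Or.inr ⟨ht, h1⟩)

lemma SLaux_rg {μ : Measure ℝ} {r g : ℝ → ℂ} (hr : LocallyIntegrable r μ)
    (hg : LocallyIntegrable g (μ.withDensity fun t => ((‖r t‖₊ : ℝ≥0∞)))) (A B : ℝ) :
    IntegrableOn (fun t => r t * g t) (Ioc A B) μ := by
  have h := (hg.integrableOn_isCompact (isCompact_Icc (a := A) (b := B))).mono_set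
    Ioc_subset_Icc_self
  have hr' := (hr.integrableOn_isCompact (isCompact_Icc (a := A) (b := B))).mono_set
    Ioc_subset_Icc_self
  rw [IntegrableOn, restrict_withDensity measurableSet_Ioc,
    integrable_withDensity_iff_integrable_coe_smul₀ hr'.aestronglyMeasurable.aemeasurable.nnnorm] at h
  have hm : AEStronglyMeasurable (fun t => r t / (‖r t‖ : ℂ)) (μ.restrict (Ioc A B)) := by
    refine AEMeasurable.aestronglyMeasurable ?_
    have := hr'.aestronglyMeasurable.aemeasurable
    exact this.div (Complex.measurable_ofReal.comp_aemeasurable this.norm)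
  have := SLaux_bdd_int _ h hm 1 (fun x => by
    rw [norm_div, Complex.norm_real, norm_norm]; exact div_self_le_one _)
  refine this.congr (ae_of_all _ fun t => ?_)
  by_cases h0 : r t = 0
  · simp [h0]
  · have : (‖r t‖ : ℂ) ≠ 0 := by simpa using h0
    simp only [coe_nnnorm, Complex.real_smul]
    field_simp

lemma SLaux_junk {μ : Measure ℝ} [SFinite μ] {w s f u u1 : ℝ → ℂ}
    (hw : ∀ A B, IntegrableOn w (Ioc A B)) (hs : ∀ A B, IntegrableOn s (Ioc A B) μ)
    (hf : ∀ A B, IntegrableOn f (Ioc A B) μ)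
    (H : ∀ c x : ℝ, c ≤ x → u x = u c + ∫ t in c..x, w t * u1 t ∧
      u1 x = u1 c + ∫ t in Set.Ioc c x, (s t * u t - f t) ∂μ) (A B : ℝ) (hAB : A ≤ B) :
    SLauxSol μ w s f A B u u1 := by
  have st : ContinuousOn u (Icc A B) → IntegrableOn (fun t => w t * u1 t) (Ioc A B) ∧
      IntegrableOn (fun t => s t * u t - f t) (Ioc A B) μ := by
    intro hc
    have h2 : IntegrableOn (fun t => s t * u t - f t) (Ioc A B) μ := by
      refine IntegrableOn.mono_set ?_ Ioc_subset_Icc_self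
      have sub : Icc A B ⊆ Ioc (A - 1) B := fun x hx => ⟨by linarith [hx.1], hx.2⟩
      exact (((hs _ _).mono_set sub).mul_continuousOn hc isCompact_Icc).sub ((hf _ _).mono_set sub)
    refine ⟨?_, h2⟩
    have h2' := h2.integrable_indicator measurableSet_Ioc
    have := SLaux_bdd_int _ (hw A B) (v := fun t => u1 A + ∫ y in A..t,
      (Ioc A B).indicator (fun t => s t * u t - f t) y ∂μ)
      (stronglyMeasurable_const.add
        (SLaux_prim_meas μ h2'.aestronglyMeasurable A)).aestronglyMeasurable
      (‖u1 A‖ + ∫ y, ‖(Ioc A B).indicator (fun t => s t * u t - f t) y‖ ∂μ)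
      (fun x => (norm_add_le _ _).trans (by gcongr; exact SLaux_prim_bound μ h2' A x))
    refine IntegrableOn.congr_fun this (fun t ht => ?_) measurableSet_Ioc
    congr 1
    rw [(H A t ht.1.le).2, intervalIntegral.integral_of_le ht.1.le]
    congr 1
    refine setIntegral_congr_fun measurableSet_Ioc fun y hy => ?_
    exact indicator_of_mem (show y ∈ Ioc A B from ⟨hy.1, hy.2.trans ht.2⟩) _
  have main : IntegrableOn (fun t => w t * u1 t) (Ioc A B) ∧
      IntegrableOn (fun t => s t * u t - f t) (Ioc A B) μ := by
    by_cases hi : IntegrableOn (fun t => w t * u1 t) (Ioc A B)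
    · refine st ?_
      have := intervalIntegral.continuousOn_primitive_interval' (a := A)
        ((intervalIntegrable_iff_integrableOn_Ioc_of_le hAB).2 hi) left_mem_uIcc
      rw [uIcc_of_le hAB] at this
      exact (continuousOn_const (c := u A)|>.add this).congr fun x hx => (H A x hx.1).1
    · have z : ∀ x y, x ≤ y → ¬ IntegrableOn (fun t => w t * u1 t) (Ioc x y) → u y = u x := by
        intro x y hxy hn
        rw [(H x y hxy).1, intervalIntegral.integral_undef, add_zero]
        rwa [intervalIntegrable_iff_integrableOn_Ioc_of_le hxy]
      refine st ((continuousOn_const (c := u A)).congr fun x hx => ?_)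
      by_cases h1 : IntegrableOn (fun t => w t * u1 t) (Ioc A x)
      · by_cases h2 : IntegrableOn (fun t => w t * u1 t) (Ioc x B)
        · exact absurd (by rw [← Ioc_union_Ioc_eq_Ioc hx.1 hx.2]; exact h1.union h2) hi
        · rw [← z x B hx.2 h2, z A B hAB hi]
      · exact z A x hx.1 h1
  refine SLaux_base (left_mem_Icc.2 hAB) main.1 main.2 fun y hy => ?_
  rw [intervalIntegral.integral_of_le hy.1 (μ := μ)]
  exact H A y hy.1

/-- Existence and uniqueness: for `g` locally integrable with respect to `|r| dσ_κ`, `z ∈ ℂ`,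
`c ∈ 𝕋_κ` and `d₁, d₂ ∈ ℂ` there is a unique solution pair `(u, u^[1])` of `(ℓ - z) u = g`
with `u(c) = d₁` and `u^[1](c) = d₂`. -/
theorem existsUnique_solution_sturm_liouville_time_scale
    (T : Set ℝ) (hne : T.Nonempty) (hcl : IsClosed T)
    (hfive : ∃ s : Finset ℝ, ↑s ⊆ T ∧ 5 ≤ s.card)
    (μ ν : Measure ℝ)
    (hμ : ∀ c d : ℝ, c ≤ d →
      μ (Set.Ioc c d) = ENNReal.ofReal (tsSigma (tsKappa T) d - tsSigma (tsKappa T) c))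
    (hν : ∀ c d : ℝ, c ≤ d → ν (Set.Ico c d) = ENNReal.ofReal (tsRho T d - tsRho T c))
    (p r q : ℝ → ℂ)
    (hr : LocallyIntegrable r μ) (hq : LocallyIntegrable q μ)
    (hp : LocallyIntegrable (fun t => 1 / p t) ν)
    (g : ℝ → ℂ) (hg : LocallyIntegrable g (μ.withDensity fun t => ((‖r t‖₊ : ℝ≥0∞))))
    (z : ℂ) :
    ∀ c ∈ tsKappa T, ∀ d₁ d₂ : ℂ,
      ∃! U : (ℝ → ℂ) × (ℝ → ℂ),
        IsSLSol T μ p r q z g U.1 U.2 ∧ U.1 c = d₁ ∧ U.2 c = d₂ := by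
  intro c _ d₁ d₂
  have hfin : IsLocallyFiniteMeasure μ := ⟨fun x => ⟨Ioc (x - 1) (x + 1),
    Ioc_mem_nhds (by linarith) (by linarith), by
      rw [hμ _ _ (by linarith)]; exact ENNReal.ofReal_lt_top⟩⟩
  set w : ℝ → ℂ := fun t => 1 / extK T p t with hwd
  set s : ℝ → ℂ := fun t => q t - z * r t with hsd
  set f : ℝ → ℂ := fun t => r t * g t with hfd
  have hw : ∀ A B, IntegrableOn w (Ioc A B) := SLaux_w_int T hne ν hν p hp
  have hf : ∀ A B, IntegrableOn f (Ioc A B) μ := SLaux_rg hr hg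
  have loc : ∀ {h : ℝ → ℂ}, LocallyIntegrable h μ → ∀ A B, IntegrableOn h (Ioc A B) μ :=
    fun hh A B => (hh.integrableOn_isCompact (isCompact_Icc (a := A) (b := B))).mono_set
      Ioc_subset_Icc_self
  have hs : ∀ A B, IntegrableOn s (Ioc A B) μ := fun A B =>
    (loc hq A B).sub ((loc hr A B).const_mul z)
  have hP := SLauxP_all hw hs hf
  have ediv : ∀ u1 : ℝ → ℂ, ∀ t, u1 t / extK T p t = w t * u1 t := fun u1 t => by
    simp only [hwd]; ring
  have conv : ∀ u u1, IsSLSol T μ p r q z g u u1 → ∀ A B, A ≤ B → SLauxSol μ w s f A B u u1 := by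
    intro u u1 hu
    refine SLaux_junk hw hs hf fun c x hcx => ?_
    have := hu c x hcx
    simp only [ediv] at this
    exact this
  obtain ⟨u, u1, hu, e, e1⟩ := SLaux_global hP c d₁ d₂
  refine ⟨(u, u1), ⟨fun c x hcx => ?_, e, e1⟩, ?_⟩
  · have := (hu c x).2.2 c (left_mem_Icc.2 hcx) x (right_mem_Icc.2 hcx)
    rw [intervalIntegral.integral_of_le hcx (μ := μ)] at this
    simp only [ediv]
    exact this
  · rintro ⟨v, v1⟩ ⟨hv, k, k1⟩
    simp only at hv k k1
    have key : ∀ x, v x = u x ∧ v1 x = u1 x := fun x => by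
      have hle : min x c ≤ max x c := min_le_max
      exact (hP _ _ hle c ⟨min_le_right _ _, le_max_right _ _⟩).2 v v1 u u1
        (conv v v1 hv _ _ hle) (hu _ _) (k.trans e.symm) (k1.trans e1.symm) x
        ⟨min_le_left _ _, le_max_left _ _⟩
    exact Prod.ext (funext fun x => (key x).1) (funext fun x => (key x).2)
end
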